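/- (DPRM Theorem) Every recursively enumerable set of n-tuples of natural numbers is Diophantine: if S ⊆ (Fin n → ℕ) is such that membership in S is semidecidable (S is the domain of a partial recursive function under a standard encoding of tuples), then there exist m and integer polynomials in n parameters and m unknowns whose solvability in natural numbers characterizes membership in S (i.e., S is a Diophantine set in the sense of Mathlib's Dioph). -/

import Mathlib

open Dioph

/-! ### Binomial coefficients and factorials are Diophantine -/

/-- The binomial coefficients are the digits of `(b + 1) ^ n` in base `b = 2 ^ n + 1`. -/
theorem Nat.choose_eq_div_mod (n k : ℕ) :
    n.choose k = (2 ^ n + 1 + 1) ^ n / (2 ^ n + 1) ^ k % (2 ^ n + 1) := by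
  set b := 2 ^ n + 1 with hb
  have hb1 : 1 < b := by have := Nat.two_pow_pos n; omega
  have hsum : ∀ m, Nat.ofDigits b ((List.range m).map n.choose) =
      ∑ i ∈ Finset.range m, b ^ i * n.choose i := by
    intro m
    induction m with
    | zero => simp
    | succ m ih =>
      rw [List.range_succ, List.map_append, Nat.ofDigits_append, ih, Finset.sum_range_succ]
      simp
  have hpow : (b + 1) ^ n = Nat.ofDigits b ((List.range (n + 1)).map n.choose) := by
    rw [hsum, add_pow]
    simp
  have hdigits : Nat.digits b ((b + 1) ^ n) = (List.range (n + 1)).map n.choose := by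
    rw [hpow]
    refine Nat.digits_ofDigits b hb1 _ ?_ ?_
    · intro l hl
      obtain ⟨i, -, rfl⟩ := List.mem_map.1 hl
      have := Nat.choose_le_two_pow n i
      omega
    · intro h
      simp [List.range_succ]
  rw [← Nat.getD_digits _ _ hb1, hdigits]
  rcases lt_or_ge k (n + 1) with hk | hk
  · simp [List.getD, hk]
  · rw [List.getD_eq_default _ _ (by simpa using hk), Nat.choose_eq_zero_of_lt hk]

/-- A lower bound for the descending factorial `r (r - 1) ⋯ (r - m + 1)`. -/
theorem Nat.pow_succ_le_mul_descFactorial_add {m n r : ℕ} (hm : m ≤ n) (hn : n ≤ r) :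
    r ^ (m + 1) ≤ r * r.descFactorial m + m * n * r ^ m := by
  induction m with
  | zero => simp
  | succ m ih =>
    obtain ⟨d, rfl⟩ := Nat.exists_eq_add_of_le (show m ≤ r by omega)
    have ih := ih (by omega)
    have hle := Nat.descFactorial_le_pow (m + d) m
    have hmul : m * ((m + d) * (m + d).descFactorial m) ≤ n * (m + d) ^ (m + 1) := by
      rw [pow_succ']
      gcongr
      omega
    rw [Nat.descFactorial_succ, Nat.add_sub_cancel_left]
    calc (m + d) ^ (m + 1 + 1) = (m + d) * (m + d) ^ (m + 1) := _root_.pow_succ' _ _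
      _ ≤ (m + d) * ((m + d) * (m + d).descFactorial m + m * n * (m + d) ^ m) := by gcongr
      _ = (m + d) * (d * (m + d).descFactorial m) +
          m * ((m + d) * (m + d).descFactorial m) + m * n * (m + d) ^ (m + 1) := by ring
      _ ≤ (m + d) * (d * (m + d).descFactorial m) +
          n * (m + d) ^ (m + 1) + m * n * (m + d) ^ (m + 1) := by gcongr
      _ = _ := by ring

theorem Nat.pow_div_choose_eq_factorial {n r : ℕ} (hr : (n.factorial + 1) * n ^ 2 < r) :
    r ^ n / r.choose n = n.factorial := by
  have hnr : n ≤ r := by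
    have := Nat.le_self_pow two_ne_zero n
    nlinarith [Nat.zero_le (n.factorial * n ^ 2)]
  have hc : 0 < r.choose n := Nat.choose_pos hnr
  have hdesc := Nat.descFactorial_eq_factorial_mul_choose r n
  have hle : r.descFactorial n ≤ r ^ n := Nat.descFactorial_le_pow r n
  have hlow := Nat.pow_succ_le_mul_descFactorial_add le_rfl hnr
  have hrn : 0 < r ^ n := pow_pos (by omega) n
  have hF := n.factorial_pos
  refine Nat.div_eq_of_lt_le (by rwa [← hdesc]) ?_
  refine Nat.lt_of_mul_lt_mul_left (a := n.factorial * r) ?_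
  have h1 := Nat.mul_le_mul_left (n.factorial + 1) hlow
  have h2 := Nat.mul_lt_mul_of_pos_right hr hrn
  calc n.factorial * r * r ^ n < (n.factorial + 1) * (r * r.descFactorial n) := by
        rw [pow_succ] at h1
        nlinarith
    _ = n.factorial * r * ((n.factorial + 1) * r.choose n) := by rw [hdesc]; ring

theorem Dioph.choose_dioph {α : Type} {f g : (α → ℕ) → ℕ} (df : DiophFn f) (dg : DiophFn g) :
    DiophFn fun v => (f v).choose (g v) := by
  have hb : DiophFn fun v => 2 ^ f v + 1 := add_dioph (pow_dioph (const_dioph 2) df) (const_dioph 1)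
  have h := mod_dioph (div_dioph (pow_dioph (add_dioph hb (const_dioph 1)) df) (pow_dioph hb dg)) hb
  simpa only [Nat.choose_eq_div_mod, Function.const_apply] using h

theorem Dioph.factorial_dioph {α : Type} {f : (α → ℕ) → ℕ} (df : DiophFn f) :
    DiophFn fun v => (f v).factorial := by
  have hr : DiophFn fun v => (f v ^ f v + 1) * f v ^ 2 + 1 :=
    add_dioph (mul_dioph (add_dioph (pow_dioph df df) (const_dioph 1))
      (pow_dioph df (const_dioph 2))) (const_dioph 1)
  have heq (n : ℕ) : ((n ^ n + 1) * n ^ 2 + 1) ^ n / ((n ^ n + 1) * n ^ 2 + 1).choose n =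
      n.factorial := by
    refine Nat.pow_div_choose_eq_factorial (Nat.lt_succ_of_le ?_)
    gcongr
    exact Nat.factorial_le_pow n
  simpa only [heq] using div_dioph (pow_dioph hr df) (choose_dioph hr df)

theorem Nat.choose_pred_eq_prod {N y : ℕ} (hy : ∀ k < y, k + 1 ∣ N) :
    (N - 1).choose y = ∏ k ∈ Finset.range y, (N / (k + 1) - 1) := by
  refine Nat.eq_of_mul_eq_mul_left y.factorial_pos ?_
  rw [← Nat.descFactorial_eq_factorial_mul_choose, Nat.descFactorial_eq_prod_range,
    ← Finset.prod_range_add_one_eq_factorial, ← Finset.prod_mul_distrib]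
  refine Finset.prod_congr rfl fun k hk => ?_
  rw [Nat.mul_sub, Nat.mul_div_cancel' (hy k (Finset.mem_range.1 hk))]
  omega

/-! ### Pairwise coprime moduli -/

section Moduli

variable {Q k : ℕ}

theorem factorial_dvd_factorial_sq_div (hk : k < Q) :
    Q.factorial ∣ Q.factorial ^ 2 / (k + 1) := by
  have h : k + 1 ∣ Q.factorial := Nat.dvd_factorial (Nat.succ_pos k) hk
  rw [sq, Nat.mul_div_assoc _ h]
  exact dvd_mul_right _ _

theorem add_one_dvd_factorial_sq (hk : k < Q) : k + 1 ∣ Q.factorial ^ 2 :=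
  (Nat.dvd_factorial (Nat.succ_pos k) hk).trans (dvd_pow_self _ two_ne_zero)

theorem factorial_le_factorial_sq_div (hk : k < Q) :
    Q.factorial ≤ Q.factorial ^ 2 / (k + 1) := by
  refine Nat.le_of_dvd (Nat.div_pos ?_ k.succ_pos) (factorial_dvd_factorial_sq_div hk)
  exact Nat.le_of_dvd (pow_pos Q.factorial_pos 2) (add_one_dvd_factorial_sq hk)

theorem lt_of_prime_dvd_modulus {p : ℕ} (hp : p.Prime) (hk : k < Q)
    (h : p ∣ Q.factorial ^ 2 / (k + 1) - 1) : Q < p := by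
  by_contra! hpQ
  have h1 : p ∣ Q.factorial ^ 2 / (k + 1) :=
    (Nat.dvd_factorial hp.pos hpQ).trans (factorial_dvd_factorial_sq_div hk)
  have h2 := factorial_le_factorial_sq_div hk
  have h3 := Q.factorial_pos
  have h4 := (Nat.dvd_sub_iff_right (by omega) h1).1 h
  exact hp.one_lt.ne' (Nat.dvd_one.1 h4)

theorem modulus_modEq (hk : k < Q) :
    Q.factorial ^ 2 - 1 ≡ k [MOD Q.factorial ^ 2 / (k + 1) - 1] := by
  have h1 : k + 1 ≤ Q.factorial ^ 2 :=
    Nat.le_of_dvd (pow_pos Q.factorial_pos 2) (add_one_dvd_factorial_sq hk)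
  refine ((Nat.modEq_iff_dvd' (by omega)).2 ⟨k + 1, ?_⟩).symm
  rw [Nat.sub_mul, Nat.div_mul_cancel (add_one_dvd_factorial_sq hk)]
  omega

theorem modulus_coprime {j : ℕ} (hk : k < Q) (hj : j < Q) (hkj : k ≠ j) :
    (Q.factorial ^ 2 / (k + 1) - 1).Coprime (Q.factorial ^ 2 / (j + 1) - 1) := by
  refine Nat.coprime_of_dvd fun p hp hpk hpj => ?_
  have hQp := lt_of_prime_dvd_modulus hp hk hpk
  have h := ((modulus_modEq hk).of_dvd hpk).symm.trans ((modulus_modEq hj).of_dvd hpj)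
  exact hkj (h.eq_of_lt_of_lt (by omega) (by omega))

theorem two_lt_modulus (hQ : 3 < Q) (hk : k < Q) : 2 < Q.factorial ^ 2 / (k + 1) - 1 := by
  have h1 := factorial_le_factorial_sq_div hk
  have h2 := Q.self_le_factorial
  omega

theorem coprime_modulus_factorial (hk : k < Q) {u : ℕ} (hu : u ≤ Q) :
    (Q.factorial ^ 2 / (k + 1) - 1).Coprime u.factorial :=
  Nat.coprime_of_dvd fun p hp hpk hpu =>
    absurd (lt_of_prime_dvd_modulus hp hk hpk) (by have := (hp.dvd_factorial).1 hpu; omega)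

end Moduli

theorem Nat.dvd_choose_of_modEq {m a z u : ℕ} (hm : m.Coprime (u + 1).factorial)
    (h : a ≡ z [MOD m]) (hz : z ≤ u) : m ∣ a.choose (u + 1) := by
  rcases le_or_gt z a with hza | hza
  · refine hm.dvd_of_dvd_mul_left ?_
    rw [← Nat.descFactorial_eq_factorial_mul_choose, Nat.descFactorial_eq_prod_range]
    exact ((Nat.modEq_iff_dvd' hza).1 h.symm).trans
      (Finset.dvd_prod_of_mem (fun i => a - i) (Finset.mem_range.2 (by omega)))
  · rw [Nat.choose_eq_zero_of_lt (by omega)]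
    exact dvd_zero m

theorem Nat.Prime.mod_le_of_dvd_choose {p a u : ℕ} (hp : p.Prime)
    (h : p ∣ a.choose (u + 1)) : a % p ≤ u := by
  rcases le_or_gt a u with hau | hau
  · exact (Nat.mod_le a p).trans hau
  · have h1 : p ∣ a.descFactorial (u + 1) := by
      rw [Nat.descFactorial_eq_factorial_mul_choose]
      exact h.mul_left _
    rw [Nat.descFactorial_eq_prod_range, hp.prime.dvd_finsetProd_iff] at h1
    obtain ⟨i, hi, hpi⟩ := h1
    have hi := Finset.mem_range.1 hi
    have h2 : i % p = a % p := (Nat.modEq_iff_dvd' (by omega)).2 hpi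
    rw [← h2]
    exact (Nat.mod_le i p).trans (by omega)

/-! ### Congruences and bounds for polynomials -/

/-- The residue of a polynomial value depends on the residues of finitely many variables. -/
theorem Poly.exists_finset_modEq {α : Type*} (p : Poly α) : ∃ s : Finset α,
    ∀ (m : ℕ) (x y : α → ℕ), (∀ i ∈ s, x i ≡ y i [MOD m]) → p x ≡ p y [ZMOD m] := by
  classical
  induction p using Poly.induction with
  | H1 i => exact ⟨{i}, fun m x y h => by simpa [Int.natCast_modEq_iff] using h i (by simp)⟩
  | H2 n => exact ⟨∅, fun m x y _ => by simp⟩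
  | H3 f g hf hg =>
    obtain ⟨s, hs⟩ := hf
    obtain ⟨t, ht⟩ := hg
    exact ⟨s ∪ t, fun m x y h => (hs m x y fun i hi => h i (by simp [hi])).sub
      (ht m x y fun i hi => h i (by simp [hi]))⟩
  | H4 f g hf hg =>
    obtain ⟨s, hs⟩ := hf
    obtain ⟨t, ht⟩ := hg
    exact ⟨s ∪ t, fun m x y h => (hs m x y fun i hi => h i (by simp [hi])).mul
      (ht m x y fun i hi => h i (by simp [hi]))⟩

/-- Every polynomial has a monotone Diophantine majorant. -/
theorem Poly.exists_majorant {α : Type} (p : Poly α) : ∃ q : (α → ℕ) → ℕ,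
    DiophFn q ∧ Monotone q ∧ ∀ x, (p x).natAbs ≤ q x := by
  induction p using Poly.induction with
  | H1 i => exact ⟨fun x => x i, proj_dioph i, fun x y h => h i, fun x => by simp⟩
  | H2 n => exact ⟨fun _ => n.natAbs, const_dioph _, monotone_const, fun x => by simp⟩
  | H3 f g hf hg =>
    obtain ⟨q, dq, mq, hq⟩ := hf
    obtain ⟨r, dr, mr, hr⟩ := hg
    exact ⟨fun x => q x + r x, add_dioph dq dr, mq.add mr, fun x =>
      (Int.natAbs_sub_le _ _).trans (add_le_add (hq x) (hr x))⟩
  | H4 f g hf hg =>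
    obtain ⟨q, dq, mq, hq⟩ := hf
    obtain ⟨r, dr, mr, hr⟩ := hg
    exact ⟨fun x => q x * r x, mul_dioph dq dr, fun x y h => Nat.mul_le_mul (mq h) (mr h),
      fun x => by simpa [Int.natAbs_mul] using Nat.mul_le_mul (hq x) (hr x)⟩

/-! ### Quantifiers -/

theorem Dioph.exists_dioph {α : Type} {P : ℕ → (α → ℕ) → Prop}
    (h : Dioph {w : Option α → ℕ | P (w none) (w ∘ some)}) : Dioph {v | ∃ x, P x v} :=
  ex1_dioph h

/-- Elimination of a bounded universal quantifier in front of a Diophantine relation: the witnesses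
`t` for the various `k < y` are combined, by the Chinese remainder theorem, into a single `a`. -/
theorem Poly.forall_lt_exists_iff {α β : Type} {p : Poly (Option α ⊕ β)} {s : Finset (Option α ⊕ β)}
    (hs : ∀ (m : ℕ) (x y : Option α ⊕ β → ℕ), (∀ i ∈ s, x i ≡ y i [MOD m]) → p x ≡ p y [ZMOD m])
    {q : (Option α ⊕ β → ℕ) → ℕ} (mq : Monotone q) (hq : ∀ x, (p x).natAbs ≤ q x)
    (y : ℕ) (v : α → ℕ) :
    (∀ k < y, ∃ t : β → ℕ, p (Sum.elim (Option.elim' k v) t) = 0) ↔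
      ∃ (u : ℕ) (a : β → ℕ) (Q : ℕ), Q = q (Sum.elim (Option.elim' y v) fun _ => u) + u + y + 4 ∧
        (Q.factorial ^ 2 - 1).choose y ∣
          (p (Sum.elim (Option.elim' (Q.factorial ^ 2 - 1) v) a)).natAbs ∧
        ∀ b ∈ s.toRight, (Q.factorial ^ 2 - 1).choose y ∣ (a b).choose (u + 1) := by
  constructor
  · intro h
    choose! t ht using h
    let u := (Finset.range y).sup fun k => s.toRight.sup (t k)
    obtain ⟨Q, hQ⟩ : ∃ Q, Q = q (Sum.elim (Option.elim' y v) fun _ => u) + u + y + 4 := ⟨_, rfl⟩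
    have hkQ : ∀ k ∈ Finset.range y, k < Q := fun k hk => by
      have := Finset.mem_range.1 hk
      omega
    have hcop : Set.Pairwise (Finset.range y : Set ℕ)
        (Function.onFun Nat.Coprime fun k => Q.factorial ^ 2 / (k + 1) - 1) :=
      fun i hi j hj hij => modulus_coprime (hkQ i hi) (hkQ j hj) hij
    have hcrt : ∀ b, ∃ a, ∀ k ∈ Finset.range y, a ≡ t k b [MOD Q.factorial ^ 2 / (k + 1) - 1] :=
      fun b => by
        obtain ⟨a, ha⟩ := Nat.chineseRemainderOfFinset (fun k => t k b)
          (fun k => Q.factorial ^ 2 / (k + 1) - 1) (Finset.range y)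
          (fun k hk => by have := two_lt_modulus (by omega) (hkQ k hk); omega) hcop
        exact ⟨a, ha⟩
    choose a ha using hcrt
    have hdvd : ∀ z, (∀ k ∈ Finset.range y, Q.factorial ^ 2 / (k + 1) - 1 ∣ z) →
        (Q.factorial ^ 2 - 1).choose y ∣ z := fun z hz => by
      rw [Nat.choose_pred_eq_prod
        (fun k hk => add_one_dvd_factorial_sq (hkQ k (Finset.mem_range.2 hk)))]
      exact Finset.prod_dvd_of_isRelPrime
        (fun i hi j hj hij => Nat.coprime_iff_isRelPrime.1 (hcop hi hj hij)) hz
    refine ⟨u, a, Q, hQ, hdvd _ fun k hk => ?_, fun b hb => hdvd _ fun k hk => ?_⟩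
    · have hmod := hs (Q.factorial ^ 2 / (k + 1) - 1)
        (Sum.elim (Option.elim' (Q.factorial ^ 2 - 1) v) a) (Sum.elim (Option.elim' k v) (t k)) (by
          rintro ((_ | i) | b) -
          · exact modulus_modEq (hkQ k hk)
          · exact Nat.ModEq.refl _
          · exact ha b k hk)
      rw [ht k (Finset.mem_range.1 hk)] at hmod
      exact Int.natCast_dvd.1 (Int.modEq_zero_iff_dvd.1 hmod)
    · refine Nat.dvd_choose_of_modEq (coprime_modulus_factorial (hkQ k hk) (by omega)) (ha b k hk) ?_
      exact (Finset.le_sup (f := t k) hb).trans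
        (Finset.le_sup (f := fun k => s.toRight.sup (t k)) hk)
  · classical
    rintro ⟨u, a, Q, hQ, hp, ha⟩ k hk
    have hkQ : k < Q := by omega
    have hM := two_lt_modulus (by omega) hkQ
    obtain ⟨P, hP, hPM⟩ := Nat.exists_prime_and_dvd (show Q.factorial ^ 2 / (k + 1) - 1 ≠ 1 by omega)
    have hQP := lt_of_prime_dvd_modulus hP hkQ hPM
    have hPW : P ∣ (Q.factorial ^ 2 - 1).choose y := by
      rw [Nat.choose_pred_eq_prod (fun k hk => add_one_dvd_factorial_sq (by omega))]
      exact hPM.trans (Finset.dvd_prod_of_mem (fun k => Q.factorial ^ 2 / (k + 1) - 1)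
        (Finset.mem_range.2 hk))
    let t : β → ℕ := fun b => if b ∈ s.toRight then a b % P else 0
    have htu : ∀ b, t b ≤ u := fun b => by
      by_cases hb : b ∈ s.toRight
      · rw [show t b = a b % P from if_pos hb]
        exact hP.mod_le_of_dvd_choose (hPW.trans (ha b hb))
      · rw [show t b = 0 from if_neg hb]
        exact Nat.zero_le u
    have hmod := hs P (Sum.elim (Option.elim' (Q.factorial ^ 2 - 1) v) a)
      (Sum.elim (Option.elim' k v) t) (by
        rintro ((_ | i) | b) hi
        · exact (modulus_modEq hkQ).of_dvd hPM
        · exact Nat.ModEq.refl _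
        · have hb : b ∈ s.toRight := Finset.mem_toRight.2 hi
          rw [Sum.elim_inr, Sum.elim_inr, show t b = a b % P from if_pos hb]
          exact (Nat.mod_modEq (a b) P).symm)
    have hdvd : P ∣ (p (Sum.elim (Option.elim' k v) t)).natAbs :=
      Int.natCast_dvd.1 (Int.modEq_zero_iff_dvd.1
        (hmod.symm.trans (Int.modEq_zero_iff_dvd.2 (Int.natCast_dvd.2 (hPW.trans hp)))))
    have hle : q (Sum.elim (Option.elim' k v) t) ≤ q (Sum.elim (Option.elim' y v) fun _ => u) :=
      mq (by
        rintro ((_ | i) | b)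
        · exact hk.le
        · exact le_rfl
        · exact htu b)
    have hlt := hq (Sum.elim (Option.elim' k v) t)
    exact ⟨t, Int.natAbs_eq_zero.1 (Nat.eq_zero_of_dvd_of_lt hdvd (by omega))⟩

theorem Dioph.forall_mem_finset_dioph {α ι : Type} (s : Finset ι) {S : ι → Set (α → ℕ)}
    (h : ∀ i ∈ s, Dioph (S i)) : Dioph {v | ∀ i ∈ s, v ∈ S i} := by
  refine (DiophList.forall (s.toList.map S) ?_).ext fun v => ?_
  · rw [List.forall_iff_forall_mem]
    simpa using h
  · rw [Set.mem_ofPred_eq, List.forall_iff_forall_mem]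
    simp

/-- Diophantine sets are closed under bounded universal quantification. -/
theorem Dioph.forall_lt_dioph {α : Type} {P : ℕ → (α → ℕ) → Prop} {f : (α → ℕ) → ℕ}
    (df : DiophFn f) (h : Dioph {w : Option α → ℕ | P (w none) (w ∘ some)}) :
    Dioph {v | ∀ k < f v, P k v} := by
  obtain ⟨β, p, hp⟩ := h
  obtain ⟨s, hs⟩ := p.exists_finset_modEq
  obtain ⟨q, dq, mq, hq⟩ := p.exists_majorant
  suffices H : Dioph {w : Option α → ℕ | ∀ k < w none, P k (w ∘ some)} from diophFn_comp1 H df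
  let γ := Option α ⊕ Option β
  have hy : DiophFn fun w : γ → ℕ => w (Sum.inl none) := proj_dioph _
  have hu : DiophFn fun w : γ → ℕ => w (Sum.inr none) := proj_dioph _
  let Q : (γ → ℕ) → ℕ := fun w =>
    q (w ∘ Sum.elim Sum.inl fun _ => Sum.inr none) + w (Sum.inr none) + w (Sum.inl none) + 4
  have hQ : DiophFn Q :=
    add_dioph (add_dioph (add_dioph (reindex_diophFn _ dq) hu) hy) (const_dioph 4)
  have hN : DiophFn fun w => (Q w).factorial ^ 2 - 1 :=
    sub_dioph (pow_dioph (factorial_dioph hQ) (const_dioph 2)) (const_dioph 1)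
  have hW : DiophFn fun w => ((Q w).factorial ^ 2 - 1).choose (w (Sum.inl none)) :=
    choose_dioph hN hy
  have hdvd : Dioph {w : γ → ℕ | ((Q w).factorial ^ 2 - 1).choose (w (Sum.inl none)) ∣
      (p (Sum.elim (Option.elim' ((Q w).factorial ^ 2 - 1) (w ∘ Sum.inl ∘ some))
        (w ∘ Sum.inr ∘ some))).natAbs} := by
    have hpoly := abs_poly_dioph (p.map (Sum.elim
      (Option.elim' (none : Option γ) (some ∘ Sum.inl ∘ some)) (some ∘ Sum.inr ∘ some)))
    refine (diophFn_comp1 (dvd_dioph (reindex_diophFn some hW) hpoly) hN).ext fun w => ?_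
    simp only [Set.mem_ofPred_eq, Poly.map_apply]
    have h1 : Option.elim' ((Q w).factorial ^ 2 - 1) w ∘ some = w := rfl
    have h2 : Option.elim' ((Q w).factorial ^ 2 - 1) w ∘ Sum.elim
        (Option.elim' (none : Option γ) (some ∘ Sum.inl ∘ some)) (some ∘ Sum.inr ∘ some) =
        Sum.elim (Option.elim' ((Q w).factorial ^ 2 - 1) (w ∘ Sum.inl ∘ some))
          (w ∘ Sum.inr ∘ some) := by
      funext i
      rcases i with (_ | i) | b <;> rfl
    rw [h1, h2]
  have hall : Dioph {w : γ → ℕ | ∀ b ∈ s.toRight,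
      w ∈ {w : γ → ℕ | ((Q w).factorial ^ 2 - 1).choose (w (Sum.inl none)) ∣
        (w (Sum.inr (some b))).choose (w (Sum.inr none) + 1)}} :=
    forall_mem_finset_dioph _ fun b _ =>
      dvd_dioph hW (choose_dioph (proj_dioph _) (add_dioph hu (const_dioph 1)))
  refine (ex_dioph (hdvd.inter hall)).ext fun w => ?_
  have hiff : (∀ k < w none, P k (w ∘ some)) ↔
      ∀ k < w none, ∃ t : β → ℕ, p (Sum.elim (Option.elim' k (w ∘ some)) t) = 0 :=
    forall₂_congr fun k _ => hp (Option.elim' k (w ∘ some))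
  have harg (x : Option β → ℕ) : Sum.elim w x ∘ (Sum.elim Sum.inl fun _ : β => Sum.inr none) =
      Sum.elim (Option.elim' (w none) (w ∘ some)) fun _ => x none := by
    funext i
    rcases i with (_ | i) | b <;> rfl
  have hQx (x : Option β → ℕ) : Q (Sum.elim w x) =
      q (Sum.elim (Option.elim' (w none) (w ∘ some)) fun _ => x none) + x none + w none + 4 := by
    simp only [Q, harg, Sum.elim_inl, Sum.elim_inr]
  rw [Set.mem_ofPred_eq, Set.mem_ofPred_eq, hiff, Poly.forall_lt_exists_iff hs mq hq]
  constructor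
  · rintro ⟨x, h1, h2⟩
    exact ⟨x none, x ∘ some, Q (Sum.elim w x), hQx x, h1, h2⟩
  · rintro ⟨u, a, _, rfl, h1, h2⟩
    have hQu : q (Sum.elim (Option.elim' (w none) (w ∘ some)) fun _ => u) + u + w none + 4 =
      Q (Sum.elim w (Option.elim' u a)) := (hQx (Option.elim' u a)).symm
    rw [hQu] at h1 h2
    exact ⟨Option.elim' u a, h1, h2⟩

/-! ### Pairing and the Gödel beta function -/

section Pairing

variable {α : Type} {f g : (α → ℕ) → ℕ}

theorem Dioph.pair_dioph (df : DiophFn f) (dg : DiophFn g) :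
    DiophFn fun v => Nat.pair (f v) (g v) := by
  have df' := reindex_diophFn some df
  have dg' := reindex_diophFn some dg
  have hx : DiophFn fun w : Option α → ℕ => w none := proj_dioph none
  have h := ((lt_dioph df' dg').inter (eq_dioph (add_dioph (mul_dioph dg' dg') df') hx)).union
    ((le_dioph dg' df').inter
      (eq_dioph (add_dioph (add_dioph (mul_dioph df' df') df') dg') hx))
  refine h.ext fun w => ?_
  simp only [Set.mem_union, Set.mem_inter_iff, Set.mem_ofPred_eq, Nat.pair]
  split_ifs with hlt
  · simp [hlt]
  · simp [hlt, not_lt.1 hlt]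

theorem Dioph.unpair_fst_dioph (df : DiophFn f) : DiophFn fun v => (f v).unpair.1 := by
  have h : Dioph {w : Option α → ℕ | ∃ b, Nat.pair (w none) b = f (w ∘ some)} :=
    exists_dioph (P := fun b (w : Option α → ℕ) => Nat.pair (w none) b = f (w ∘ some))
      (eq_dioph (pair_dioph (proj_dioph _) (proj_dioph _))
        (reindex_diophFn some (reindex_diophFn some df)))
  refine h.ext fun w => ⟨?_, fun hw => ⟨(f (w ∘ some)).unpair.2, ?_⟩⟩
  · rintro ⟨b, hb⟩
    simp [← hb]
  · rw [← show _ = w none from hw, Nat.pair_unpair]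

theorem Dioph.unpair_snd_dioph (df : DiophFn f) : DiophFn fun v => (f v).unpair.2 := by
  have h : Dioph {w : Option α → ℕ | ∃ a, Nat.pair a (w none) = f (w ∘ some)} :=
    exists_dioph (P := fun a (w : Option α → ℕ) => Nat.pair a (w none) = f (w ∘ some))
      (eq_dioph (pair_dioph (proj_dioph _) (proj_dioph _))
        (reindex_diophFn some (reindex_diophFn some df)))
  refine h.ext fun w => ⟨?_, fun hw => ⟨(f (w ∘ some)).unpair.1, ?_⟩⟩
  · rintro ⟨b, hb⟩
    simp [← hb]
  · rw [← show _ = w none from hw, Nat.pair_unpair]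

theorem Dioph.beta_dioph (df : DiophFn f) (dg : DiophFn g) :
    DiophFn fun v => Nat.beta (f v) (g v) :=
  mod_dioph (unpair_fst_dioph df) (add_dioph
    (mul_dioph (add_dioph dg (const_dioph 1)) (unpair_snd_dioph df)) (const_dioph 1))

end Pairing

theorem Nat.exists_beta_eq (s : ℕ → ℕ) (n : ℕ) : ∃ c, ∀ k ≤ n, Nat.beta c k = s k := by
  refine ⟨Nat.unbeta ((List.range (n + 1)).map s), fun k hk => ?_⟩
  have h := Nat.beta_unbeta_coe ((List.range (n + 1)).map s) ⟨k, by simp; omega⟩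
  simpa using h

/-! ### Partial recursive functions -/

/-- The graph of `f` remains Diophantine after substituting Diophantine functions. -/
def DiophGraph (f : ℕ →. ℕ) : Prop :=
  ∀ {α : Type} {g h : (α → ℕ) → ℕ}, DiophFn g → DiophFn h → Dioph {v | h v ∈ f (g v)}

/-- Primitive recursion in terms of the sequence of intermediate values. -/
theorem Nat.mem_rec_iff_exists_beta {F : Part ℕ} {G : ℕ → ℕ →. ℕ} {n b : ℕ} :
    b ∈ (Nat.rec F (fun y IH => IH >>= G y) n : Part ℕ) ↔
      ∃ c, Nat.beta c 0 ∈ F ∧ Nat.beta c n = b ∧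
        ∀ k < n, Nat.beta c (k + 1) ∈ G k (Nat.beta c k) := by
  have hseq : ∀ n b, b ∈ (Nat.rec F (fun y IH => IH >>= G y) n : Part ℕ) ↔
      ∃ s : ℕ → ℕ, s 0 ∈ F ∧ s n = b ∧ ∀ k < n, s (k + 1) ∈ G k (s k) := by
    intro n
    induction n with
    | zero =>
      intro b
      refine ⟨fun h => ⟨fun _ => b, h, rfl, by simp⟩, ?_⟩
      rintro ⟨s, h, rfl, -⟩
      exact h
    | succ n ih =>
      intro b
      refine Part.mem_bind_iff.trans ⟨?_, ?_⟩
      · rintro ⟨i, hi, hb⟩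
        obtain ⟨s, h0, rfl, hs⟩ := (ih i).1 hi
        refine ⟨fun k => if k ≤ n then s k else b, by simpa, by simp, fun k hk => ?_⟩
        rcases Nat.lt_succ_iff_lt_or_eq.1 hk with hk | rfl
        · simpa [hk.le, Nat.succ_le_of_lt hk] using hs k hk
        · simpa using hb
      · rintro ⟨s, h0, rfl, hs⟩
        exact ⟨s n, (ih _).2 ⟨s, h0, rfl, fun k hk => hs k (by omega)⟩, hs n (by omega)⟩
  rw [hseq]
  constructor
  · rintro ⟨s, h0, rfl, hs⟩
    obtain ⟨c, hc⟩ := Nat.exists_beta_eq s n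
    refine ⟨c, by rwa [hc 0 (by omega)], hc n le_rfl, fun k hk => ?_⟩
    rw [hc k (by omega), hc (k + 1) (by omega)]
    exact hs k hk
  · rintro ⟨c, h⟩
    exact ⟨Nat.beta c, h⟩

section DiophGraph

variable {f g : ℕ →. ℕ}

theorem DiophGraph.pair (hf : DiophGraph f) (hg : DiophGraph g) :
    DiophGraph fun n => Nat.pair <$> f n <*> g n := by
  intro α a b da db
  have h : Dioph {v | ∃ x y, x ∈ f (a v) ∧ y ∈ g (a v) ∧ Nat.pair x y = b v} :=
    exists_dioph (P := fun x v => ∃ y, x ∈ f (a v) ∧ y ∈ g (a v) ∧ Nat.pair x y = b v) <|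
    exists_dioph (P := fun y (w : Option α → ℕ) => w none ∈ f (a (w ∘ some)) ∧
      y ∈ g (a (w ∘ some)) ∧ Nat.pair (w none) y = b (w ∘ some)) <|
    have da' := reindex_diophFn some (reindex_diophFn some da)
    have db' := reindex_diophFn some (reindex_diophFn some db)
    (hf da' (proj_dioph _)).inter <| (hg da' (proj_dioph _)).inter <|
      eq_dioph (pair_dioph (proj_dioph _) (proj_dioph _)) db'
  refine h.ext fun v => ?_
  simp [Seq.seq]

theorem DiophGraph.comp (hf : DiophGraph f) (hg : DiophGraph g) :
    DiophGraph fun n => g n >>= f := by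
  intro α a b da db
  have h : Dioph {v | ∃ x, x ∈ g (a v) ∧ b v ∈ f x} :=
    exists_dioph (P := fun x v => x ∈ g (a v) ∧ b v ∈ f x) <|
    (hg (reindex_diophFn some da) (proj_dioph _)).inter
      (hf (proj_dioph _) (reindex_diophFn some db))
  exact h.ext fun v => (Part.mem_bind_iff).symm

theorem DiophGraph.prec (hf : DiophGraph f) (hg : DiophGraph g) :
    DiophGraph (Nat.unpaired fun a n =>
      n.rec (f a) fun y IH => do let i ← IH; g (Nat.pair a (Nat.pair y i))) := by
  intro α a b da db
  have h : Dioph {v | ∃ c, Nat.beta c 0 ∈ f (a v).unpair.1 ∧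
      Nat.beta c (a v).unpair.2 = b v ∧ ∀ k < (a v).unpair.2,
        Nat.beta c (k + 1) ∈ g (Nat.pair (a v).unpair.1 (Nat.pair k (Nat.beta c k)))} :=
    exists_dioph (P := fun c v => Nat.beta c 0 ∈ f (a v).unpair.1 ∧
      Nat.beta c (a v).unpair.2 = b v ∧ ∀ k < (a v).unpair.2,
        Nat.beta c (k + 1) ∈ g (Nat.pair (a v).unpair.1 (Nat.pair k (Nat.beta c k)))) <|
    have da' := reindex_diophFn some da
    (hf (unpair_fst_dioph da') (beta_dioph (proj_dioph _) (const_dioph 0))).inter <|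
    (eq_dioph (beta_dioph (proj_dioph _) (unpair_snd_dioph da')) (reindex_diophFn some db)).inter <|
    forall_lt_dioph (P := fun k (w : Option α → ℕ) => Nat.beta (w none) (k + 1) ∈
      g (Nat.pair (a (w ∘ some)).unpair.1 (Nat.pair k (Nat.beta (w none) k))))
      (unpair_snd_dioph da') <|
    hg (pair_dioph (unpair_fst_dioph (reindex_diophFn some da')) (pair_dioph (proj_dioph _)
        (beta_dioph (proj_dioph _) (proj_dioph _))))
      (beta_dioph (proj_dioph _) (add_dioph (proj_dioph _) (const_dioph 1)))
  exact h.ext fun v => (Nat.mem_rec_iff_exists_beta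
    (G := fun y i => g (Nat.pair (a v).unpair.1 (Nat.pair y i)))).symm

theorem DiophGraph.rfind (hf : DiophGraph f) :
    DiophGraph fun a => Nat.rfind fun n => (fun m => m = 0) <$> f (Nat.pair a n) := by
  intro α a b da db
  have h : Dioph {v | 0 ∈ f (Nat.pair (a v) (b v)) ∧
      ∀ k < b v, ∃ x, x ∈ f (Nat.pair (a v) k) ∧ x ≠ 0} :=
    (hf (pair_dioph da db) (const_dioph 0)).inter <|
    forall_lt_dioph (P := fun k v => ∃ x, x ∈ f (Nat.pair (a v) k) ∧ x ≠ 0) db <|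
    exists_dioph (P := fun x (w : Option α → ℕ) =>
      x ∈ f (Nat.pair (a (w ∘ some)) (w none)) ∧ x ≠ 0) <|
    (hf (pair_dioph (reindex_diophFn some (reindex_diophFn some da)) (proj_dioph _))
      (proj_dioph _)).inter (ne_dioph (proj_dioph _) (const_dioph 0))
  refine h.ext fun v => Iff.trans ?_ Nat.mem_rfind.symm
  simp

end DiophGraph

theorem Nat.Partrec.diophGraph {f : ℕ →. ℕ} (hf : Nat.Partrec f) : DiophGraph f := by
  induction hf with
  | zero => exact fun da db => (eq_dioph db (const_dioph 0)).ext fun v => Part.mem_some_iff.symm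
  | succ =>
    exact fun da db => (eq_dioph db (add_dioph da (const_dioph 1))).ext fun v =>
      Part.mem_some_iff.symm
  | left =>
    exact fun da db => (eq_dioph db (unpair_fst_dioph da)).ext fun v => Part.mem_some_iff.symm
  | right =>
    exact fun da db => (eq_dioph db (unpair_snd_dioph da)).ext fun v => Part.mem_some_iff.symm
  | pair _ _ hf hg => exact hf.pair hg
  | comp _ _ hf hg => exact hf.comp hg
  | prec _ _ hf hg => exact hf.prec hg
  | rfind _ hf => exact hf.rfind

theorem Dioph.encode_list_dioph {α ι : Type} [Encodable ι] {l : List ((α → ℕ) → ι)}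
    (hl : ∀ f ∈ l, DiophFn fun v => Encodable.encode (f v)) :
    DiophFn fun v => Encodable.encode (l.map fun f => f v) := by
  induction l with
  | nil => exact const_dioph 0
  | cons f l ih =>
    exact add_dioph (pair_dioph (hl f (by simp)) (ih fun g hg => hl g (by simp [hg])))
      (const_dioph 1)

theorem Dioph.encode_dioph (n : ℕ) : DiophFn fun v : Fin n → ℕ => Encodable.encode v := by
  have h := encode_list_dioph (l := List.ofFn fun (i : Fin n) (v : Fin n → ℕ) =>
    (⟨i, v i⟩ : Σ _ : Fin n, ℕ)) (by
      intro f hf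
      obtain ⟨i, rfl⟩ := (List.mem_ofFn' _ _).1 hf
      exact pair_dioph (const_dioph _) (proj_dioph i))
  simp only [List.map_ofFn, Function.comp_def] at h
  have heq (v : Fin n → ℕ) : Encodable.encode v =
      Encodable.encode (List.ofFn fun i => (⟨i, v i⟩ : Σ _ : Fin n, ℕ)) := by
    rw [← List.Vector.toList_ofFn]
    rfl
  simpa only [heq] using h

/-- **The DPRM theorem**: every recursively enumerable set of `n`-tuples of natural
numbers (i.e. the domain of a partial recursive function under the standard encoding
of tuples) is Diophantine. -/
theorem dprm_theorem (n : ℕ) (S : Set (Fin n → ℕ))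
    (hre : ∃ f : ℕ →. ℕ, Nat.Partrec f ∧
      ∀ v : Fin n → ℕ, v ∈ S ↔ (f (Encodable.encode v)).Dom) :
    Dioph S := by
  obtain ⟨f, hf, hS⟩ := hre
  have h : Dioph {v : Fin n → ℕ | ∃ x, x ∈ f (Encodable.encode v)} :=
    exists_dioph (P := fun x (v : Fin n → ℕ) => x ∈ f (Encodable.encode v)) <|
      hf.diophGraph (reindex_diophFn some (encode_dioph n)) (proj_dioph none)
  exact h.ext fun v => Part.dom_iff_mem.symm.trans (hS v).symm
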